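/- Let γ > 0, 1 < α < 2, p > 1, a > 0, b > 0. Suppose w ∈ C¹([0,∞)), w ≢ 0, the function t ↦ ₀I_t^{2−α}(w(s) − w'(0)s − w(0)) is in AC²([0,T]) for every T > 0, and for almost every t ≥ 0 one has (₀D_t^α w)(t) + a·w(t) ≥ b·(₀I_t^γ (|w|^p))(t). Then liminf_{t→+∞} |w(t)| = 0, and liminf_{t→+∞} t^{min{(α+γ−1)/p, γ/(p−1)}}·|w(t)| < +∞. -/

import Mathlib

/-!
The second claim implies the first, since the exponent `κ = min ((α + γ - 1) / p) (γ / (p - 1))` is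
positive. The second is proved by the test-function method.

Testing the inequality on `[0, T]` with `(1 - t / T) ^ (m + 1)` amounts to applying the fractional
integral of order `m + 2` and evaluating at `T`. Integrating twice (`integrated_ineq`) turns
`D^α w = g''` into `g = I^{2-α}(w - w'(0) s - w(0))`, up to the term `g'(0) t`. Applying a further
integral of order `m` and using the semigroup law (`rlJ_rlJ`) gives, after rescaling to `[0, 1]`
(`scaled_ineq`), for `T ≥ 1`,

`B T^γ ∫ (1-u)^{m+1+γ} |w(Tu)|^p du ≤ A ∫ (1-u)^{m+1-α} |w(Tu)| du + C T^{1-α}`.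

For `m` large enough that `(m + 1 + γ) / p ≤ m + 1 - α`, Young's inequality absorbs the first term
on the right at the cost of `O(T^{-γ/(p-1)})`. So
`T^γ ∫ (1-u)^{m+1+γ} |w(Tu)|^p du = O(T^{-γ/(p-1)} + T^{1-α}) = O(T^{γ-κp})`, by the choice of `κ`.
If `|w(t)| ≥ M t^{-κ}` for all large `t`, the left side is at least a constant times
`M^p T^{γ-κp}`, which bounds `M` (`frequently_lt_of_scaled`).
-/

open MeasureTheory Filter

/-- Riemann–Liouville fractional integral of order `σ` based at `0`:
`(₀I_t^σ f)(t) = (1/Γ(σ)) ∫₀ᵗ (t−s)^{σ−1} f(s) ds`. -/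
noncomputable def rlInt (σ : ℝ) (f : ℝ → ℝ) (t : ℝ) : ℝ :=
  (1 / Real.Gamma σ) * ∫ s in (0:ℝ)..t, (t - s) ^ (σ - 1) * f s

/-- The function whose second derivative is the (left) Caputo derivative of order `α ∈ (1,2]`:
for `α < 2` it is `₀I_t^{2−α}(w(s) − w'(0)·s − w(0))`, and for `α = 2` it is `w` itself. -/
noncomputable def capKernel (α : ℝ) (w : ℝ → ℝ) : ℝ → ℝ :=
  if α = 2 then w else rlInt (2 - α) (fun s => w s - deriv w 0 * s - w 0)

/-- Left Caputo fractional derivative of order `α ∈ (1,2]`: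
`(₀D_t^α w)(t) = (d²/dt²)[ ₀I_t^{2−α}(w(s) − w'(0)s − w(0)) ](t)` (second derivative of `w` when `α = 2`). -/
noncomputable def caputoD (α : ℝ) (w : ℝ → ℝ) : ℝ → ℝ :=
  deriv (deriv (capKernel α w))

/-- `g ∈ AC²([0,T])`: `g` is differentiable on `[0,T]`, its second derivative is integrable,
and `g'` is the integral of `g''` (i.e. `g'` is absolutely continuous). -/
def AC2On (g : ℝ → ℝ) (T : ℝ) : Prop :=
  (∀ t ∈ Set.Icc (0:ℝ) T, DifferentiableAt ℝ g t) ∧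
  IntervalIntegrable (deriv (deriv g)) volume 0 T ∧
  ∀ t ∈ Set.Icc (0:ℝ) T, deriv g t = deriv g 0 + ∫ s in (0:ℝ)..t, deriv (deriv g) s

/-! ### Fractional integrals -/

/-- The Riemann–Liouville integral without its normalising factor `1 / Γ(σ)`. -/
noncomputable def rlJ (σ : ℝ) (f : ℝ → ℝ) (t : ℝ) : ℝ :=
  ∫ s in (0:ℝ)..t, (t - s) ^ (σ - 1) * f s

/-- The integral `rlJ` rescaled to the unit interval, so that `rlJ σ f T = T ^ σ * rlN σ f T`. -/
noncomputable def rlN (σ : ℝ) (f : ℝ → ℝ) (T : ℝ) : ℝ :=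
  ∫ u in (0:ℝ)..1, (1 - u) ^ (σ - 1) * f (T * u)

lemma rlInt_eq (σ : ℝ) (f : ℝ → ℝ) (t : ℝ) :
    rlInt σ f t = (1 / Real.Gamma σ) * rlJ σ f t := rfl

lemma rlJ_eq_rlN {σ T : ℝ} (hσ : 0 < σ) (hT : 0 ≤ T) (f : ℝ → ℝ) :
    rlJ σ f T = T ^ σ * rlN σ f T := by
  rcases hT.eq_or_lt with rfl | hT
  · simp [rlJ, Real.zero_rpow hσ.ne']
  have h := intervalIntegral.mul_integral_comp_mul_add (a := 0) (b := 1)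
    (f := fun s => (T - s) ^ (σ - 1) * f s) T 0
  simp only [mul_zero, add_zero, mul_one] at h
  rw [rlJ, ← h, rlN]
  have h2 : ∫ x in (0:ℝ)..1, (T - T * x) ^ (σ - 1) * f (T * x)
      = ∫ x in (0:ℝ)..1, T ^ (σ - 1) * ((1 - x) ^ (σ - 1) * f (T * x)) := by
    apply intervalIntegral.integral_congr
    intro x hx
    rw [Set.uIcc_of_le zero_le_one] at hx
    have : T - T * x = T * (1 - x) := by ring
    simp only [this]
    rw [Real.mul_rpow hT.le (by linarith [hx.2])]
    ring
  rw [h2, intervalIntegral.integral_const_mul, ← mul_assoc, Real.rpow_sub_one hT.ne']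
  field_simp

lemma intervalIntegrable_sub_rpow {r : ℝ} (hr : -1 < r) (t : ℝ) :
    IntervalIntegrable (fun s => (t - s) ^ r) volume 0 t := by
  have h := (intervalIntegral.intervalIntegrable_rpow' (a := t) (b := 0) hr).comp_sub_left t
  simpa using h

lemma rlN_continuous {σ : ℝ} (hσ : 0 < σ) {f : ℝ → ℝ} (hf : Continuous f) :
    Continuous (rlN σ f) := by
  -- dominated convergence needs a bound uniform in `T`, so continuity is tested on a ball
  rw [continuous_iff_continuousAt]
  intro T₀
  obtain ⟨M, hM⟩ := (isCompact_closedBall (0:ℝ) (|T₀| + 1)).exists_bound_of_continuousOn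
    hf.continuousOn
  have hk := intervalIntegrable_sub_rpow (r := σ - 1) (by linarith) 1
  unfold rlN
  apply intervalIntegral.continuousAt_of_dominated_interval
    (bound := fun u => |(1 - u) ^ (σ - 1)| * M)
  · refine Eventually.of_forall fun T => ?_
    have : IntervalIntegrable (fun u => (1 - u) ^ (σ - 1) * f (T * u)) volume 0 1 :=
      hk.mul_continuousOn (by fun_prop)
    have h1 := this.aestronglyMeasurable
    rwa [Set.uIoc_of_le zero_le_one]
  · filter_upwards [Metric.ball_mem_nhds T₀ one_pos] with T hT
    refine Eventually.of_forall fun u hu => ?_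
    rw [Set.uIoc_of_le zero_le_one] at hu
    rw [norm_mul, Real.norm_eq_abs]
    gcongr
    apply hM
    rw [Metric.mem_ball, Real.dist_eq] at hT
    rw [mem_closedBall_zero_iff, Real.norm_eq_abs, abs_mul, abs_of_pos hu.1]
    have h1 : |T| ≤ |T₀| + 1 := by
      have := abs_sub_abs_le_abs_sub T T₀
      linarith
    nlinarith [abs_nonneg T, hu.1, hu.2]
  · exact hk.abs.mul_const M
  · refine Eventually.of_forall fun u _ => ?_
    have : Continuous fun T => (1 - u) ^ (σ - 1) * f (T * u) := by fun_prop
    exact this.continuousAt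

lemma rlJ_continuousOn {σ : ℝ} (hσ : 0 < σ) {f : ℝ → ℝ} (hf : Continuous f) :
    ContinuousOn (rlJ σ f) (Set.Ici 0) := by
  have h : Continuous fun T : ℝ => T ^ σ * rlN σ f T :=
    (Real.continuous_rpow_const hσ.le).mul (rlN_continuous hσ hf)
  exact h.continuousOn.congr fun T hT => rlJ_eq_rlN hσ hT f

/-- The Beta integral, without its evaluation in terms of `Γ`. -/
noncomputable def betaC (μ ν : ℝ) : ℝ :=
  ∫ x in (0:ℝ)..1, (1 - x) ^ (μ - 1) * x ^ (ν - 1)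

lemma betaC_pos {μ ν : ℝ} (hμ : 1 ≤ μ) (hν : 0 < ν) : 0 < betaC μ ν := by
  apply intervalIntegral.intervalIntegral_pos_of_pos_on
  · refine (intervalIntegral.intervalIntegrable_rpow' (by linarith)).continuousOn_mul ?_
    exact ((Real.continuous_rpow_const (by linarith)).comp
      (continuous_const.sub continuous_id)).continuousOn
  · intro x hx
    have := hx.1
    have : 0 < 1 - x := by linarith [hx.2]
    positivity
  · exact zero_lt_one

lemma integral_beta {μ ν s T : ℝ} (hsT : s < T) :
    ∫ t in s..T, (T - t) ^ (μ - 1) * (t - s) ^ (ν - 1)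
      = (T - s) ^ (μ + ν - 1) * betaC μ ν := by
  have hd : 0 < T - s := by linarith
  have h := intervalIntegral.mul_integral_comp_mul_add (a := 0) (b := 1)
    (f := fun t => (T - t) ^ (μ - 1) * (t - s) ^ (ν - 1)) (T - s) s
  simp only [mul_zero, mul_one, zero_add, sub_add_cancel] at h
  rw [← h, betaC]
  have h2 : ∫ x in (0:ℝ)..1, (T - ((T - s) * x + s)) ^ (μ - 1) * ((T - s) * x + s - s) ^ (ν - 1)
      = ∫ x in (0:ℝ)..1, ((T - s) ^ (μ - 1) * (T - s) ^ (ν - 1)) *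
          ((1 - x) ^ (μ - 1) * x ^ (ν - 1)) := by
    apply intervalIntegral.integral_congr
    intro x hx
    rw [Set.uIcc_of_le zero_le_one] at hx
    have e1 : T - ((T - s) * x + s) = (T - s) * (1 - x) := by ring
    have e2 : (T - s) * x + s - s = (T - s) * x := by ring
    simp only [e1, e2]
    rw [Real.mul_rpow hd.le (by linarith [hx.2]), Real.mul_rpow hd.le hx.1]
    ring
  rw [h2, intervalIntegral.integral_const_mul, ← mul_assoc, ← Real.rpow_add hd]
  have : μ + ν - 1 = (μ - 1 + (ν - 1)) + 1 := by ring
  rw [this, Real.rpow_add_one hd.ne']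
  ring

/-- The semigroup law for fractional integrals, by Fubini on the triangle `0 < s < t < T`. -/
lemma rlJ_rlJ {μ ν T : ℝ} (hμ : 1 ≤ μ) (hν : 0 < ν) (hT : 0 ≤ T) {f : ℝ → ℝ}
    (hf : Continuous f) : rlJ μ (rlJ ν f) T = betaC μ ν * rlJ (μ + ν) f T := by
  set A : ℝ → ℝ := (Set.Ioo 0 T).indicator fun t => (T - t) ^ (μ - 1) with hA
  set k : ℝ → ℝ := (Set.Ioo 0 T).indicator fun x => x ^ (ν - 1) with hk
  set F : ℝ → ℝ := (Set.Ioo 0 T).indicator f with hF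
  have hcA : Continuous fun t : ℝ => (T - t) ^ (μ - 1) :=
    (Real.continuous_rpow_const (by linarith)).comp (continuous_const.sub continuous_id)
  have hAm : Measurable A := hcA.measurable.indicator measurableSet_Ioo
  have hkI : Integrable k := by
    rw [hk, integrable_indicator_iff measurableSet_Ioo,
      ← intervalIntegrable_iff_integrableOn_Ioo_of_le hT]
    exact intervalIntegral.intervalIntegrable_rpow' (by linarith)
  have hFI : Integrable F := by
    rw [hF, integrable_indicator_iff measurableSet_Ioo,
      ← intervalIntegrable_iff_integrableOn_Ioo_of_le hT]
    exact hf.intervalIntegrable _ _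
  have hAb : ∀ t, ‖A t‖ ≤ T ^ (μ - 1) := by
    intro t
    by_cases ht : t ∈ Set.Ioo 0 T
    · rw [hA, Set.indicator_of_mem ht, Real.norm_eq_abs,
        abs_of_nonneg (Real.rpow_nonneg (by linarith [ht.2]) _)]
      exact Real.rpow_le_rpow (by linarith [ht.2]) (by linarith [ht.1]) (by linarith)
    · rw [hA, Set.indicator_of_notMem ht, norm_zero]
      positivity
  have hint : Integrable (Function.uncurry fun t s => A t * (F s * k (t - s)))
      (volume.prod volume) := by
    have h1 := Integrable.convolution_integrand (ContinuousLinearMap.mul ℝ ℝ) hFI hkI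
    refine h1.bdd_mul (c := T ^ (μ - 1)) (f := fun q : ℝ × ℝ => A q.1) ?_ ?_
    · exact (hAm.comp measurable_fst).aestronglyMeasurable
    · exact Eventually.of_forall fun q => hAb q.1
  have hsw := integral_integral_swap hint
  have hL : rlJ μ (rlJ ν f) T = ∫ t, ∫ s, A t * (F s * k (t - s)) := by
    rw [rlJ, intervalIntegral.integral_of_le hT, integral_Ioc_eq_integral_Ioo,
      ← integral_indicator measurableSet_Ioo]
    congr 1
    ext t
    rw [integral_const_mul]
    by_cases ht : t ∈ Set.Ioo 0 T
    · rw [Set.indicator_of_mem ht, hA, Set.indicator_of_mem ht, rlJ,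
        intervalIntegral.integral_of_le ht.1.le, integral_Ioc_eq_integral_Ioo,
        ← integral_indicator measurableSet_Ioo]
      congr 2
      ext s
      by_cases hs : s ∈ Set.Ioo 0 t
      · have h1 : s ∈ Set.Ioo 0 T := ⟨hs.1, hs.2.trans ht.2⟩
        have h2 : t - s ∈ Set.Ioo 0 T := ⟨by linarith [hs.2], by linarith [hs.1, ht.2]⟩
        rw [Set.indicator_of_mem hs, hF, Set.indicator_of_mem h1, hk, Set.indicator_of_mem h2]
        ring
      · rw [Set.indicator_of_notMem hs]
        by_cases h1 : s ∈ Set.Ioo 0 T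
        · have h2 : t - s ∉ Set.Ioo 0 T := fun h => hs ⟨h1.1, by linarith [h.1]⟩
          rw [hk, Set.indicator_of_notMem h2, mul_zero]
        · rw [hF, Set.indicator_of_notMem h1, zero_mul]
    · rw [Set.indicator_of_notMem ht, hA, Set.indicator_of_notMem ht, zero_mul]
  have hR : betaC μ ν * rlJ (μ + ν) f T = ∫ s, ∫ t, A t * (F s * k (t - s)) := by
    rw [rlJ, ← intervalIntegral.integral_const_mul, intervalIntegral.integral_of_le hT,
      integral_Ioc_eq_integral_Ioo, ← integral_indicator measurableSet_Ioo]
    congr 1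
    ext s
    by_cases hs : s ∈ Set.Ioo 0 T
    · have h0 := integral_beta (μ := μ) (ν := ν) hs.2
      rw [intervalIntegral.integral_of_le hs.2.le, integral_Ioc_eq_integral_Ioo,
        ← integral_indicator measurableSet_Ioo] at h0
      have h3 : (fun t => A t * (F s * k (t - s))) = fun t => f s *
          (Set.Ioo s T).indicator (fun t => (T - t) ^ (μ - 1) * (t - s) ^ (ν - 1)) t := by
        ext t
        rw [hF, Set.indicator_of_mem hs]
        by_cases ht : t ∈ Set.Ioo s T
        · have h1 : t ∈ Set.Ioo 0 T := ⟨hs.1.trans ht.1, ht.2⟩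
          have h2 : t - s ∈ Set.Ioo 0 T := ⟨by linarith [ht.1], by linarith [hs.1, ht.2]⟩
          rw [Set.indicator_of_mem ht, hA, Set.indicator_of_mem h1, hk, Set.indicator_of_mem h2]
          ring
        · rw [Set.indicator_of_notMem ht]
          by_cases h1 : t ∈ Set.Ioo 0 T
          · have h2 : t - s ∉ Set.Ioo 0 T := fun h => ht ⟨by linarith [h.1], h1.2⟩
            rw [hk, Set.indicator_of_notMem h2, mul_zero, mul_zero]
          · rw [hA, Set.indicator_of_notMem h1, zero_mul, mul_zero]
      rw [h3, integral_const_mul, h0, Set.indicator_of_mem hs]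
      ring
    · rw [Set.indicator_of_notMem hs]
      simp [hF, Set.indicator_of_notMem hs]
  rw [hL, hR, hsw]

lemma rlJ_mono {σ T : ℝ} (hσ : 1 ≤ σ) (hT : 0 ≤ T) {f g : ℝ → ℝ}
    (hf : ContinuousOn f (Set.Icc 0 T)) (hg : ContinuousOn g (Set.Icc 0 T))
    (h : ∀ t ∈ Set.Icc 0 T, f t ≤ g t) : rlJ σ f T ≤ rlJ σ g T := by
  have hk := intervalIntegrable_sub_rpow (r := σ - 1) (by linarith) T
  apply intervalIntegral.integral_mono_on hT
  · exact hk.mul_continuousOn (by rwa [Set.uIcc_of_le hT])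
  · exact hk.mul_continuousOn (by rwa [Set.uIcc_of_le hT])
  · intro t ht
    exact mul_le_mul_of_nonneg_left (h t ht) (Real.rpow_nonneg (by linarith [ht.2]) _)

lemma rlJ_one (f : ℝ → ℝ) (t : ℝ) : rlJ 1 f t = ∫ s in (0:ℝ)..t, f s := by
  simp [rlJ]

lemma rlJ_const_mul (σ c : ℝ) (f : ℝ → ℝ) (t : ℝ) :
    rlJ σ (fun s => c * f s) t = c * rlJ σ f t := by
  rw [rlJ, rlJ, ← intervalIntegral.integral_const_mul]
  congr 1
  ext s
  ring

lemma rlJ_add {σ T : ℝ} (hσ : 1 ≤ σ) (hT : 0 ≤ T) {f g : ℝ → ℝ}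
    (hf : ContinuousOn f (Set.Icc 0 T)) (hg : ContinuousOn g (Set.Icc 0 T)) :
    rlJ σ (fun s => f s + g s) T = rlJ σ f T + rlJ σ g T := by
  have hk := intervalIntegrable_sub_rpow (r := σ - 1) (by linarith) T
  rw [rlJ, rlJ, rlJ, ← intervalIntegral.integral_add]
  · congr 1
    ext s
    ring
  · exact hk.mul_continuousOn (by rwa [Set.uIcc_of_le hT])
  · exact hk.mul_continuousOn (by rwa [Set.uIcc_of_le hT])

/-! ### From the differential inequality to an integral estimate -/

/-- Integrating the differential inequality twice. The almost everywhere inequality involving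
`g''` becomes a pointwise one between continuous functions, in which only `g` and `g'(0)` occur. -/
lemma integrated_ineq {γ a b t : ℝ} {g w P : ℝ → ℝ} (hγ : 0 < γ) (ht : 0 ≤ t)
    (hw : Continuous w) (hP : Continuous P) (hg0 : g 0 = 0) (hAC : AC2On g t)
    (hineq : ∀ᵐ s ∂(volume.restrict (Set.Ici (0:ℝ))),
      deriv (deriv g) s + a * w s ≥ b * rlInt γ P s) :
    b / Real.Gamma γ * betaC 1 γ * betaC 1 (1 + γ) * rlJ (1 + (1 + γ)) P t
      ≤ g t + |deriv g 0| * t + a * betaC 1 1 * rlJ (1 + 1) w t := by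
  obtain ⟨hd, hF, hprim⟩ := hAC
  have hcPγ : ContinuousOn (rlJ γ P) (Set.Ici 0) := rlJ_continuousOn hγ hP
  have hcP : ContinuousOn (rlJ (1 + γ) P) (Set.Ici 0) := rlJ_continuousOn (by linarith) hP
  have hcw : ContinuousOn (rlJ 1 w) (Set.Ici 0) := rlJ_continuousOn one_pos hw
  have first : ∀ s ∈ Set.Icc 0 t, b / Real.Gamma γ * betaC 1 γ * rlJ (1 + γ) P s
      ≤ (deriv g s + |deriv g 0|) + a * rlJ 1 w s := by
    intro s hs
    have hFs : IntervalIntegrable (deriv (deriv g)) volume 0 s := by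
      apply hF.mono_set
      rw [Set.uIcc_of_le hs.1, Set.uIcc_of_le ht]
      exact Set.Icc_subset_Icc_right hs.2
    have hws : IntervalIntegrable w volume 0 s := hw.intervalIntegrable _ _
    have hPs : IntervalIntegrable (rlJ γ P) volume 0 s := by
      apply ContinuousOn.intervalIntegrable
      rw [Set.uIcc_of_le hs.1]
      exact hcPγ.mono Set.Icc_subset_Ici_self
    have hmono : ∫ r in (0:ℝ)..s, b / Real.Gamma γ * rlJ γ P r
        ≤ ∫ r in (0:ℝ)..s, (deriv (deriv g) r + a * w r) := by
      apply intervalIntegral.integral_mono_ae_restrict hs.1 (hPs.const_mul _)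
        (hFs.add (hws.const_mul a))
      have := ae_restrict_of_ae_restrict_of_subset (Set.Icc_subset_Ici_self : Set.Icc 0 s ⊆ _) hineq
      filter_upwards [this] with r hr
      rw [rlInt_eq] at hr
      calc b / Real.Gamma γ * rlJ γ P r = b * (1 / Real.Gamma γ * rlJ γ P r) := by ring
        _ ≤ _ := hr
    rw [intervalIntegral.integral_const_mul,
      intervalIntegral.integral_add hFs (hws.const_mul a), intervalIntegral.integral_const_mul,
      ← rlJ_one, ← rlJ_one (deriv _), ← rlJ_one w,
      rlJ_rlJ le_rfl hγ hs.1 hP] at hmono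
    have h2 := hprim s hs
    rw [← rlJ_one] at h2
    have h3 := neg_abs_le (deriv g 0)
    rw [mul_assoc]
    linarith
  have hcd : ContinuousOn (deriv g) (Set.Icc 0 t) := by
    have h1 : ContinuousOn (fun s => ∫ r in (0:ℝ)..s, deriv (deriv g) r) (Set.uIcc 0 t) :=
      intervalIntegral.continuousOn_primitive_interval' hF Set.left_mem_uIcc
    rw [Set.uIcc_of_le ht] at h1
    exact (continuousOn_const.add h1).congr hprim
  have hdI : IntervalIntegrable (deriv g) volume 0 t := by
    apply ContinuousOn.intervalIntegrable
    rwa [Set.uIcc_of_le ht]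
  have hgt : ∫ s in (0:ℝ)..t, deriv g s = g t := by
    rw [intervalIntegral.integral_eq_sub_of_hasDerivAt (f := g) _ hdI, hg0, sub_zero]
    intro x hx
    rw [Set.uIcc_of_le ht] at hx
    exact (hd x hx).hasDerivAt
  have hI1 : IntervalIntegrable (rlJ (1 + γ) P) volume 0 t := by
    apply ContinuousOn.intervalIntegrable
    rw [Set.uIcc_of_le ht]
    exact hcP.mono Set.Icc_subset_Ici_self
  have hI2 : IntervalIntegrable (rlJ 1 w) volume 0 t := by
    apply ContinuousOn.intervalIntegrable
    rw [Set.uIcc_of_le ht]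
    exact hcw.mono Set.Icc_subset_Ici_self
  have hI3 : IntervalIntegrable (fun s => deriv g s + |deriv g 0|) volume 0 t :=
    hdI.add (intervalIntegrable_const)
  have second := intervalIntegral.integral_mono_on ht (hI1.const_mul _)
    (hI3.add (hI2.const_mul a)) first
  rw [intervalIntegral.integral_const_mul,
    intervalIntegral.integral_add hI3 (hI2.const_mul a), intervalIntegral.integral_const_mul,
    intervalIntegral.integral_add hdI intervalIntegrable_const, hgt,
    intervalIntegral.integral_const, ← rlJ_one, ← rlJ_one, rlJ_rlJ le_rfl (by linarith) ht hP,
    rlJ_rlJ le_rfl one_pos ht hw] at second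
  simp only [sub_zero, smul_eq_mul] at second
  linarith

lemma rlN_intervalIntegrable {σ T : ℝ} (hσ : 0 < σ) {f : ℝ → ℝ} (hf : Continuous f) :
    IntervalIntegrable (fun u => (1 - u) ^ (σ - 1) * f (T * u)) volume 0 1 :=
  (intervalIntegrable_sub_rpow (r := σ - 1) (by linarith) 1).mul_continuousOn (by fun_prop)

lemma rlN_nonneg {σ T : ℝ} {f : ℝ → ℝ} (hf0 : ∀ s, 0 ≤ f s) :
    0 ≤ rlN σ f T := by
  apply intervalIntegral.integral_nonneg zero_le_one
  intro u hu
  exact mul_nonneg (Real.rpow_nonneg (by linarith [hu.2]) _) (hf0 _)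

lemma rlN_le_add {σ T K : ℝ} (hσ : 1 ≤ σ) (hK : 0 ≤ K) {f h : ℝ → ℝ} (hf : Continuous f)
    (hh : Continuous h) (hle : ∀ u ∈ Set.Icc (0:ℝ) 1, f (T * u) ≤ h (T * u) + K) :
    rlN σ f T ≤ rlN σ h T + K := by
  have h1 : ∫ u in (0:ℝ)..1, K = K := by simp
  rw [rlN, rlN]
  conv_rhs => rw [← h1]
  rw [← intervalIntegral.integral_add (rlN_intervalIntegrable (by linarith) hh)
    intervalIntegrable_const]
  apply intervalIntegral.integral_mono_on zero_le_one (rlN_intervalIntegrable (by linarith) hf)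
    ((rlN_intervalIntegrable (by linarith) hh).add intervalIntegrable_const)
  intro u hu
  have h0 : 0 ≤ 1 - u := by linarith [hu.2]
  have h2 : (1 - u) ^ (σ - 1) ≤ 1 := Real.rpow_le_one h0 (by linarith [hu.1]) (by linarith)
  have h3 : 0 ≤ (1 - u) ^ (σ - 1) := Real.rpow_nonneg h0 _
  calc (1 - u) ^ (σ - 1) * f (T * u) ≤ (1 - u) ^ (σ - 1) * (h (T * u) + K) := by
        gcongr; exact hle u hu
    _ ≤ (1 - u) ^ (σ - 1) * h (T * u) + K := by nlinarith

lemma rlN_anti {σ τ T : ℝ} (hσ : 0 < σ) (hστ : σ ≤ τ) {f : ℝ → ℝ} (hf : Continuous f)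
    (hf0 : ∀ s, 0 ≤ f s) : rlN τ f T ≤ rlN σ f T := by
  apply intervalIntegral.integral_mono_on_of_le_Ioo zero_le_one
    (rlN_intervalIntegrable (by linarith) hf) (rlN_intervalIntegrable hσ hf)
  intro u hu
  exact mul_le_mul_of_nonneg_right (Real.rpow_le_rpow_of_exponent_ge (by linarith [hu.2])
    (by linarith [hu.1]) (by linarith)) (hf0 _)

/-- The test-function estimate. Applying the fractional integral of order `m` to the twice
integrated inequality and rescaling to `[0, 1]` corresponds to testing the original inequality
with `(1 - t / T) ^ (m + 1)`. The initial data contribute only `O(T ^ (1 - α))`. -/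
lemma scaled_ineq {γ α a b m : ℝ} {w P : ℝ → ℝ} (hγ : 0 < γ) (hα1 : 1 < α) (hα2 : α < 2)
    (ha : 0 < a) (hb : 0 < b) (hm : 1 ≤ m)  (hw : Continuous w) (hP : Continuous P)
    (hAC : ∀ T > (0:ℝ), AC2On (capKernel α w) T)
    (hineq : ∀ᵐ t ∂(volume.restrict (Set.Ici (0:ℝ))),
      caputoD α w t + a * w t ≥ b * rlInt γ P t) :
    ∃ A B C : ℝ, 0 < A ∧ 0 < B ∧ 0 ≤ C ∧ ∀ T ≥ (1:ℝ),
      B * T ^ γ * rlN (m + (1 + (1 + γ))) P T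
        ≤ A * rlN (m + (2 - α)) (fun s => |w s|) T + C * T ^ (1 - α) := by
  set v : ℝ → ℝ := fun s => w s - deriv w 0 * s - w 0 with hv
  have hvc : Continuous v := by fun_prop
  have hg : capKernel α w = fun t => 1 / Real.Gamma (2 - α) * rlJ (2 - α) v t := by
    ext t
    rw [capKernel, if_neg hα2.ne, rlInt_eq]
  have hg0 : capKernel α w 0 = 0 := by rw [hg]; simp [rlJ]
  set D := |deriv (capKernel α w) 0| with hD
  set B₁ := b / Real.Gamma γ * betaC 1 γ * betaC 1 (1 + γ) with hB₁
  set A₁ := a * betaC 1 1 with hA₁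
  have hΓ : 0 < Real.Gamma γ := Real.Gamma_pos_of_pos hγ
  have hΓ2 : 0 < Real.Gamma (2 - α) := Real.Gamma_pos_of_pos (by linarith)
  have hB₁pos : 0 < B₁ := mul_pos (mul_pos (div_pos hb hΓ) (betaC_pos le_rfl hγ))
    (betaC_pos le_rfl (by linarith))
  have hA₁pos : 0 < A₁ := mul_pos ha (betaC_pos le_rfl one_pos)
  have hβ1 := betaC_pos hm (show 0 < 1 + (1 + γ) by linarith)
  have hβ2 := betaC_pos hm (show 0 < 2 - α by linarith)
  have hβ3 := betaC_pos hm (show (0:ℝ) < 1 + 1 by linarith)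
  set G := 1 / Real.Gamma (2 - α) with hG
  have hGpos : 0 < G := by positivity
  set K := |deriv w 0| + |w 0| with hK
  have hK0 : 0 ≤ K := by positivity
  have hD0 : 0 ≤ D := abs_nonneg _
  refine ⟨G * betaC m (2 - α) + A₁ * betaC m (1 + 1), B₁ * betaC m (1 + (1 + γ)),
    G * betaC m (2 - α) * K + D, by positivity, by positivity, by positivity, ?_⟩
  intro T hT
  have hT0 : 0 < T := by linarith
  have hmono : rlJ m (fun t => B₁ * rlJ (1 + (1 + γ)) P t) T
      ≤ rlJ m (fun t => (G * rlJ (2 - α) v t + D * t) + A₁ * rlJ (1 + 1) w t) T := by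
    have c1 : ContinuousOn (rlJ (1 + (1 + γ)) P) (Set.Icc 0 T) :=
      (rlJ_continuousOn (by linarith) hP).mono Set.Icc_subset_Ici_self
    have c2 : ContinuousOn (rlJ (2 - α) v) (Set.Icc 0 T) :=
      (rlJ_continuousOn (by linarith) hvc).mono Set.Icc_subset_Ici_self
    have c3 : ContinuousOn (rlJ (1 + 1) w) (Set.Icc 0 T) :=
      (rlJ_continuousOn (by linarith) hw).mono Set.Icc_subset_Ici_self
    apply rlJ_mono hm hT0.le (by fun_prop) (by fun_prop)
    intro t ht
    rcases ht.1.eq_or_lt with rfl | ht0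
    · simp [rlJ]
    · have := integrated_ineq hγ ht.1 hw hP hg0 (hAC t ht0) hineq
      rw [← hB₁, ← hD, ← hA₁] at this
      rwa [hg] at this
  have c2 : ContinuousOn (rlJ (2 - α) v) (Set.Icc 0 T) :=
    (rlJ_continuousOn (by linarith) hvc).mono Set.Icc_subset_Ici_self
  have c3 : ContinuousOn (rlJ (1 + 1) w) (Set.Icc 0 T) :=
    (rlJ_continuousOn (by linarith) hw).mono Set.Icc_subset_Ici_self
  rw [rlJ_add hm hT0.le (by fun_prop) (by fun_prop), rlJ_add hm hT0.le (by fun_prop)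
    (by fun_prop), rlJ_const_mul, rlJ_const_mul, rlJ_const_mul, rlJ_const_mul,
    rlJ_rlJ hm (by linarith) hT0.le hP, rlJ_rlJ hm (by linarith) hT0.le hvc,
    rlJ_rlJ hm (by linarith) hT0.le hw, rlJ_eq_rlN (by linarith) hT0.le,
    rlJ_eq_rlN (by linarith) hT0.le, rlJ_eq_rlN (by linarith) hT0.le,
    rlJ_eq_rlN (by linarith) hT0.le] at hmono
  have hwa : Continuous fun s => |w s| := hw.abs
  set N := rlN (m + (2 - α)) (fun s => |w s|) T with hN
  have hN0 : 0 ≤ N := rlN_nonneg fun s => abs_nonneg _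
  have b1 : rlN (m + (2 - α)) v T ≤ N + K * T := by
    apply rlN_le_add (by linarith) (by positivity) hvc hwa
    intro u hu
    have h1 : -(deriv w 0 * (T * u)) ≤ |deriv w 0| * T := by
      calc -(deriv w 0 * (T * u)) ≤ |deriv w 0 * (T * u)| := neg_le_abs _
        _ = |deriv w 0| * (T * u) := by
          rw [abs_mul, abs_of_nonneg (mul_nonneg hT0.le hu.1)]
        _ ≤ |deriv w 0| * (T * 1) := by gcongr; exact hu.2
        _ = _ := by ring
    have h2 : - w 0 ≤ |w 0| * T :=
      (neg_le_abs _).trans (le_mul_of_one_le_right (abs_nonneg _) hT)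
    have h3 := le_abs_self (w (T * u))
    simp only [hv, hK]
    linarith
  have b2 : rlN m (fun t => t) T ≤ T := by
    have := rlN_le_add (σ := m) (T := T) (f := fun t => t) (h := fun _ => 0) hm hT0.le
      continuous_id continuous_const (fun u hu => by nlinarith [hu.2])
    simpa [rlN] using this
  have b3 : rlN (m + (1 + 1)) w T ≤ N := by
    have h1 := rlN_le_add (σ := m + (1 + 1)) (T := T) (f := w) (h := fun s => |w s|) (K := 0)
      (by linarith) le_rfl hw hwa (fun u _ => by simpa using le_abs_self _)
    have h2 := rlN_anti (T := T) (σ := m + (2 - α)) (τ := m + (1 + 1)) (by linarith)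
      (by linarith) hwa (fun s => abs_nonneg _)
    linarith
  set X := T ^ (m + 2) with hX
  have hX0 : 0 < X := by positivity
  have e1 : T ^ (m + (1 + (1 + γ))) = X * T ^ γ := by
    rw [hX, ← Real.rpow_add hT0]; ring_nf
  have e2 : T ^ (m + (2 - α)) = X * T ^ (-α) := by
    rw [hX, ← Real.rpow_add hT0]; ring_nf
  have e3 : T ^ (m + (1 + 1)) = X := by rw [hX]; ring_nf
  have e4 : T ^ m * T = X * T ^ (-1:ℝ) := by
    rw [hX, ← Real.rpow_add hT0, ← Real.rpow_add_one hT0.ne']; ring_nf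
  have e5 : T ^ (-α) * T = T ^ (1 - α) := by
    rw [← Real.rpow_add_one hT0.ne']; ring_nf
  have i1 : T ^ (-α) ≤ 1 := Real.rpow_le_one_of_one_le_of_nonpos hT (by linarith)
  have i2 : T ^ (-1:ℝ) ≤ T ^ (1 - α) := Real.rpow_le_rpow_of_exponent_le hT (by linarith)
  have i3 : 0 ≤ T ^ (-α) := by positivity
  rw [e1, e2, e3] at hmono
  apply le_of_mul_le_mul_left _ hX0
  have s1 : G * (betaC m (2 - α) * (X * T ^ (-α) * rlN (m + (2 - α)) v T))
      ≤ X * (G * betaC m (2 - α) * N + G * betaC m (2 - α) * K * T ^ (1 - α)) := by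
    have h1 : T ^ (-α) * rlN (m + (2 - α)) v T ≤ N + K * T ^ (1 - α) := by
      calc T ^ (-α) * rlN (m + (2 - α)) v T ≤ T ^ (-α) * (N + K * T) := by gcongr
        _ = T ^ (-α) * N + K * (T ^ (-α) * T) := by ring
        _ ≤ N + K * T ^ (1 - α) := by rw [e5]; nlinarith
    calc _ = (X * (G * betaC m (2 - α))) * (T ^ (-α) * rlN (m + (2 - α)) v T) := by ring
      _ ≤ (X * (G * betaC m (2 - α))) * (N + K * T ^ (1 - α)) := by gcongr
      _ = _ := by ring
  have s2 : D * (T ^ m * rlN m (fun t => t) T) ≤ X * (D * T ^ (1 - α)) := by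
    calc D * (T ^ m * rlN m (fun t => t) T) ≤ D * (T ^ m * T) := by gcongr
      _ = X * (D * T ^ (-1:ℝ)) := by rw [e4]; ring
      _ ≤ _ := by gcongr
  have s3 : A₁ * (betaC m (1 + 1) * (X * rlN (m + (1 + 1)) w T))
      ≤ X * (A₁ * betaC m (1 + 1) * N) := by
    calc _ ≤ A₁ * (betaC m (1 + 1) * (X * N)) := by gcongr
      _ = _ := by ring
  have s0 : B₁ * (betaC m (1 + (1 + γ)) * (X * T ^ γ * rlN (m + (1 + (1 + γ))) P T))
      = X * (B₁ * betaC m (1 + (1 + γ)) * T ^ γ * rlN (m + (1 + (1 + γ))) P T) := by ring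
  rw [s0] at hmono
  linarith

/-! ### Large-time behaviour -/

/-- Young's inequality with crude constants: `A z` is dominated by `b z ^ p` once `z` exceeds
the threshold `(A / b) ^ (1 / (p - 1))`. -/
lemma young_crude {A b z p : ℝ} (hA : 0 < A) (hb : 0 < b) (hp : 1 < p) (hz : 0 ≤ z) :
    A * z ≤ b * z ^ p + A * (A / b) ^ (1 / (p - 1)) := by
  have hAb : 0 < A / b := div_pos hA hb
  have hth : 0 < (A / b) ^ (1 / (p - 1)) := by positivity
  rcases le_total z ((A / b) ^ (1 / (p - 1))) with h | h
  · have h1 : A * z ≤ A * (A / b) ^ (1 / (p - 1)) := by gcongr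
    have h2 : 0 ≤ b * z ^ p := by positivity
    linarith
  · have hz0 : 0 < z := hth.trans_le h
    have h1 : A / b ≤ z ^ (p - 1) := by
      calc A / b = ((A / b) ^ (1 / (p - 1))) ^ (p - 1) := by
            rw [← Real.rpow_mul hAb.le, one_div, inv_mul_cancel₀ (by linarith), Real.rpow_one]
        _ ≤ z ^ (p - 1) := by gcongr
    have h2 : z ^ p = z ^ (p - 1) * z := by
      rw [← Real.rpow_add_one hz0.ne']; ring_nf
    have h3 : A ≤ b * z ^ (p - 1) := by
      rw [div_le_iff₀ hb] at h1; linarith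
    have h4 : A * z ≤ b * z ^ (p - 1) * z := by gcongr
    have h5 : 0 ≤ A * (A / b) ^ (1 / (p - 1)) := by positivity
    rw [h2]
    linarith

/-- The test-function estimate bounds `t ^ κ * |w t|` along a sequence `t → ∞`, for every
positive `κ` not exceeding either critical exponent. Young's inequality absorbs the term in `|w|`
into the one in `|w| ^ p`. If `|w t| ≥ M t ^ (-κ)` for all large `t`, the part of the remaining
integral over `1 / 2 ≤ u ≤ 3 / 4` bounds `M` by a constant independent of `T`. -/
lemma frequently_lt_of_scaled {γ α p m κ A B C : ℝ} {w : ℝ → ℝ} (hγ : 0 < γ)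
    (hp : 1 < p) (hm : 1 ≤ m) (hα2 : α < 2)
    (hmα : (m + (1 + (1 + γ)) - 1) / p ≤ m + (2 - α) - 1) (hκ : 0 < κ)
    (hκ1 : κ ≤ (α + γ - 1) / p) (hκ2 : κ ≤ γ / (p - 1)) (hA : 0 < A) (hB : 0 < B) (hC : 0 ≤ C)
    (hw : Continuous w)
    (h : ∀ T ≥ (1:ℝ), B * T ^ γ * rlN (m + (1 + (1 + γ))) (fun s => |w s| ^ p) T
        ≤ A * rlN (m + (2 - α)) (fun s => |w s|) T + C * T ^ (1 - α)) :
    ∃ M > 0, ∃ᶠ t in atTop, t ^ κ * |w t| < M := by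
  have hp0 : 0 < p := by linarith
  have hp1 : 0 < p - 1 := by linarith
  set σ := m + (1 + (1 + γ)) with hσ
  set C' := A * (A / (B / 2)) ^ (1 / (p - 1)) with hC'
  have hC'0 : 0 < C' := by positivity
  set ε := (B / 2) * ((1 / 4) * (1 / 4 : ℝ) ^ (σ - 1)) with hε
  have hε0 : 0 < ε := by positivity
  -- `R = M ^ p` is chosen to exceed the bound `(C' + C) / ε` forced on `M ^ p` at the end
  set R := (C' + C) / ε + 1 with hR
  have hR0 : 0 < R := by positivity
  refine ⟨R ^ (1 / p), by positivity, ?_⟩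
  set M := R ^ (1 / p) with hM
  have hM0 : 0 < M := by positivity
  have hMp : M ^ p = R := by
    rw [hM, ← Real.rpow_mul hR0.le, one_div, inv_mul_cancel₀ hp0.ne', Real.rpow_one]
  intro hev
  simp only [not_lt] at hev
  obtain ⟨t₀, ht₀⟩ := eventually_atTop.1 hev
  set T := max 1 (2 * t₀) with hTdef
  have hT : 1 ≤ T := le_max_left _ _
  have hTt : 2 * t₀ ≤ T := le_max_right _ _
  have hT0 : 0 < T := by linarith
  have hPc : Continuous fun s => |w s| ^ p := hw.abs.rpow_const fun _ => Or.inr hp0.le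
  have hmain := h T hT
  set NP := rlN σ (fun s => |w s| ^ p) T with hNP
  have hIP : IntervalIntegrable (fun u => (1 - u) ^ (σ - 1) * |w (T * u)| ^ p) volume 0 1 :=
    rlN_intervalIntegrable (by linarith) hPc
  have hTγ : 0 < T ^ γ := by positivity
  have upper : A * rlN (m + (2 - α)) (fun s => |w s|) T
      ≤ B / 2 * T ^ γ * NP + C' * T ^ (-(γ / (p - 1))) := by
    have hconst : ∫ u in (0:ℝ)..1, C' * T ^ (-(γ / (p - 1))) = C' * T ^ (-(γ / (p - 1))) := by
      simp
    rw [← hconst, hNP, rlN, rlN, ← intervalIntegral.integral_const_mul,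
      ← intervalIntegral.integral_const_mul, ← intervalIntegral.integral_add
        (hIP.const_mul _) intervalIntegrable_const]
    apply intervalIntegral.integral_mono_on_of_le_Ioo zero_le_one
      ((rlN_intervalIntegrable (by linarith) hw.abs).const_mul _)
      ((hIP.const_mul _).add intervalIntegrable_const)
    intro u hu
    have hu0 : 0 < 1 - u := by linarith [hu.2]
    have hz : 0 ≤ (1 - u) ^ ((σ - 1) / p) * |w (T * u)| := by positivity
    have h1 := young_crude hA (mul_pos (half_pos hB) hTγ) hp hz
    have h2 : ((1 - u) ^ ((σ - 1) / p) * |w (T * u)|) ^ p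
        = (1 - u) ^ (σ - 1) * |w (T * u)| ^ p := by
      rw [Real.mul_rpow (by positivity) (abs_nonneg _), ← Real.rpow_mul hu0.le,
        div_mul_cancel₀ _ hp0.ne']
    have h3 : (A / (B / 2 * T ^ γ)) ^ (1 / (p - 1))
        = (A / (B / 2)) ^ (1 / (p - 1)) * T ^ (-(γ / (p - 1))) := by
      rw [← div_div, div_eq_mul_inv (A / (B / 2)), Real.mul_rpow (by positivity) (by positivity),
        ← Real.rpow_neg hT0.le, ← Real.rpow_mul hT0.le]
      congr 2
      ring
    have h4 : (1 - u) ^ (m + (2 - α) - 1) ≤ (1 - u) ^ ((σ - 1) / p) :=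
      Real.rpow_le_rpow_of_exponent_ge hu0 (by linarith [hu.1]) hmα
    rw [h2, h3] at h1
    calc A * ((1 - u) ^ (m + (2 - α) - 1) * |w (T * u)|)
        ≤ A * ((1 - u) ^ ((σ - 1) / p) * |w (T * u)|) := by gcongr
      _ ≤ _ := h1
      _ = _ := by rw [hC']; ring
  have lower : (1 / 4) * (1 / 4 : ℝ) ^ (σ - 1) * (R * T ^ (-(κ * p))) ≤ NP := by
    have hsub : ∫ u in (1/2:ℝ)..(3/4), (1 - u) ^ (σ - 1) * |w (T * u)| ^ p ≤ NP := by
      apply intervalIntegral.integral_mono_interval (by norm_num) (by norm_num) (by norm_num) _ hIP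
      filter_upwards [ae_restrict_mem measurableSet_Ioc] with u hu
      exact mul_nonneg (Real.rpow_nonneg (by linarith [hu.2]) _) (by positivity)
    have hconst : ∫ u in (1/2:ℝ)..(3/4), (1 / 4 : ℝ) ^ (σ - 1) * (R * T ^ (-(κ * p)))
        = (1 / 4) * (1 / 4 : ℝ) ^ (σ - 1) * (R * T ^ (-(κ * p))) := by
      rw [intervalIntegral.integral_const, smul_eq_mul]; ring
    rw [← hconst]
    refine le_trans ?_ hsub
    apply intervalIntegral.integral_mono_on (by norm_num) intervalIntegrable_const
    · apply hIP.mono_set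
      rw [Set.uIcc_of_le (by norm_num), Set.uIcc_of_le (by norm_num)]
      exact Set.Icc_subset_Icc (by norm_num) (by norm_num)
    intro u hu
    have hu1 := hu.1
    have hu2 := hu.2
    have hu0 : 0 < u := by linarith
    have h1 := ht₀ (T * u) (by nlinarith)
    have h2 : M * T ^ (-κ) ≤ |w (T * u)| := by
      have h3 : (T * u) ^ κ ≤ T ^ κ :=
        Real.rpow_le_rpow (by positivity) (by nlinarith) hκ.le
      rw [Real.rpow_neg hT0.le, ← div_eq_mul_inv, div_le_iff₀ (by positivity)]
      calc M ≤ (T * u) ^ κ * |w (T * u)| := h1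
        _ ≤ T ^ κ * |w (T * u)| := by gcongr
        _ = _ := mul_comm _ _
    have h3 : R * T ^ (-(κ * p)) ≤ |w (T * u)| ^ p := by
      calc R * T ^ (-(κ * p)) = (M * T ^ (-κ)) ^ p := by
            rw [Real.mul_rpow hM0.le (by positivity), hMp, ← Real.rpow_mul hT0.le, neg_mul]
        _ ≤ _ := by gcongr
    have h4 : (1 / 4 : ℝ) ^ (σ - 1) ≤ (1 - u) ^ (σ - 1) :=
      Real.rpow_le_rpow (by norm_num) (by linarith) (by linarith)
    have h5 : 0 ≤ R * T ^ (-(κ * p)) := by positivity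
    exact mul_le_mul h4 h3 h5 (Real.rpow_nonneg (by linarith) _)
  have hpw : T ^ γ * T ^ (-(κ * p)) = T ^ (γ - κ * p) := by
    rw [← Real.rpow_add hT0, sub_eq_add_neg]
  have j1 : T ^ (1 - α) ≤ T ^ (γ - κ * p) := by
    apply Real.rpow_le_rpow_of_exponent_le hT
    rw [le_div_iff₀ hp0] at hκ1
    linarith
  have j2 : T ^ (-(γ / (p - 1))) ≤ T ^ (γ - κ * p) := by
    apply Real.rpow_le_rpow_of_exponent_le hT
    have h1 : κ * p ≤ γ / (p - 1) * p := by gcongr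
    have h2 : γ / (p - 1) * p = γ + γ / (p - 1) := by field_simp; ring
    linarith
  set Y := T ^ (γ - κ * p) with hY
  have hY0 : 0 < Y := by positivity
  have k1 : B / 2 * T ^ γ * NP ≤ (C' + C) * Y := by
    have h1 : C' * T ^ (-(γ / (p - 1))) ≤ C' * Y := by gcongr
    have h2 : C * T ^ (1 - α) ≤ C * Y := by gcongr
    linarith
  have k2 : ε * R * Y ≤ B / 2 * T ^ γ * NP := by
    calc ε * R * Y = B / 2 * T ^ γ * ((1 / 4) * (1 / 4 : ℝ) ^ (σ - 1) * (R * T ^ (-(κ * p)))) := by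
          rw [← hpw, hε]; ring
      _ ≤ _ := by gcongr
  have k3 : ε * R ≤ C' + C := le_of_mul_le_mul_right (k2.trans k1) hY0
  have k4 : ε * R = C' + C + ε := by rw [hR]; field_simp
  linarith

/-- Corollary 2.5 (ii): liminf |w| = 0 and liminf t^{min{(α+γ−1)/p, γ/(p−1)}} |w| < ∞. -/
theorem liminf_props_ineq
    (γ α p a b : ℝ) (w : ℝ → ℝ)
    (hγ : 0 < γ) (hα1 : 1 < α) (hα2 : α < 2) (hp : 1 < p) (ha : 0 < a) (hb : 0 < b)
    (hw : ContDiff ℝ 1 w)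
    (hw0 : ∃ t : ℝ, 0 ≤ t ∧ w t ≠ 0)
    (hAC : ∀ T > (0:ℝ), AC2On (capKernel α w) T)
    (hineq : ∀ᵐ t ∂(volume.restrict (Set.Ici (0:ℝ))),
      caputoD α w t + a * w t ≥ b * rlInt γ (fun s => |w s| ^ p) t)
    :
    liminf (fun t : ℝ => ((|w t| : ℝ) : EReal)) atTop = 0 ∧
    liminf (fun t : ℝ =>
      ((t ^ (min ((α + γ - 1) / p) (γ / (p - 1))) * |w t| : ℝ) : EReal)) atTop < ⊤ := by
  have hp0 : 0 < p := by linarith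
  have hp1 : 0 < p - 1 := by linarith
  set κ := min ((α + γ - 1) / p) (γ / (p - 1)) with hκ
  have hκ0 : 0 < κ := lt_min (div_pos (by linarith) hp0) (div_pos hγ hp1)
  have hPc : Continuous fun s => |w s| ^ p := hw.continuous.abs.rpow_const fun _ => Or.inr hp0.le
  -- `m` is large enough for `(m + 1 + γ) / p ≤ m + 1 - α`
  set m := (α * p + γ) / (p - 1) + 1 with hm
  have hq : 0 < (α * p + γ) / (p - 1) := by positivity
  have hmα : (m + (1 + (1 + γ)) - 1) / p ≤ m + (2 - α) - 1 := by
    have h1 : (m - 1) * (p - 1) = α * p + γ := by rw [hm]; field_simp; ring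
    rw [div_le_iff₀ hp0]
    nlinarith
  obtain ⟨A, B, C, hA, hB, hC, hABC⟩ := scaled_ineq (m := m) hγ hα1 hα2 ha hb (by linarith)
    hw.continuous hPc hAC hineq
  obtain ⟨M, hM, hfreq⟩ := frequently_lt_of_scaled hγ hp (by linarith) hα2 hmα hκ0
    (min_le_left _ _) (min_le_right _ _) hA hB hC hw.continuous hABC
  refine ⟨le_antisymm ?_ ?_, ?_⟩
  · refine EReal.le_of_forall_lt_iff_le.1 fun ε hε => ?_
    have hε' : 0 < ε := by exact_mod_cast hε
    apply liminf_le_of_frequently_le'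
    have hlim : Tendsto (fun t : ℝ => M * t ^ (-κ)) atTop (nhds (M * 0)) :=
      (tendsto_rpow_neg_atTop hκ0).const_mul M
    rw [mul_zero] at hlim
    refine (hfreq.and_eventually
      ((hlim.eventually (gt_mem_nhds hε')).and (eventually_gt_atTop 0))).mono ?_
    rintro t ⟨h1, h2, h3⟩
    have h4 : |w t| < ε := by
      rw [Real.rpow_neg h3.le, ← div_eq_mul_inv, div_lt_iff₀ (by positivity)] at h2
      have h5 : 0 < t ^ κ := by positivity
      nlinarith
    exact_mod_cast h4.le
  · apply le_liminf_of_le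
    · isBoundedDefault
    · exact Eventually.of_forall fun t => by exact_mod_cast abs_nonneg _
  · refine lt_of_le_of_lt (liminf_le_of_frequently_le' (x := ((M : ℝ) : EReal)) ?_)
      (EReal.coe_lt_top M)
    exact hfreq.mono fun t ht => by exact_mod_cast ht.le
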